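/- (Theorem 3.2, part 2.) There exists σ₀ > 0 such that for every σ ≥ σ₀ the following holds. For every global minimizer Z* of the penalized problem (P_β) there exist ε > 0 and δ > 0 such that: if {Z^(k)} ⊆ (ℝ^{K×K})^{N−1} is a sequence with block-optimal sequence {Z̄^(k)} satisfying (i) {f_β(Z̄^(k))} is nonincreasing, with limit F̄, and f_β(Z̄^(k)) > F̄ for all k ≥ 1, (ii) Σ_{k=1}^∞ ‖Z̄^(k) − Z^(k)‖_F ≤ δ, and (iii) Z^(0) ∈ S^{N−1} with ‖Z^(0) − Z*‖_F < ε, then {Z^(k)} converges to a global minimizer of (P_β). -/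

import Mathlib

open Matrix Finset Filter Topology

noncomputable section

/-- Trace inner product `⟨A,B⟩ = Tr(AᵀB)` on `K×K` real matrices. -/
def mip {K : ℕ} (A B : Matrix (Fin K) (Fin K) ℝ) : ℝ := (Aᵀ * B).trace

/-- The section `S = {W : We = 𝟙, WᵀΞϱ = ϱ, Tr W = 0, W ≥ 0}` of the feasible region. -/
def Sset {K : ℕ} (e ϱ : Fin K → ℝ) : Set (Matrix (Fin K) (Fin K) ℝ) :=
  {W | W.mulVec e = (fun _ => 1) ∧ Wᵀ.mulVec (fun j => e j * ϱ j) = ϱ ∧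
    W.trace = 0 ∧ ∀ a b, 0 ≤ W a b}

/-- The discretized repulsive energy
`f(Z) = Σ_i ⟨X_i, ΛΞCΞ⟩ + Σ_{i<j} ⟨X_i, ΞΛX_jΞCΞ⟩` (blocks indexed by `Fin m`, `m = N−1`). -/
def fE {K m : ℕ} (e ϱ : Fin K → ℝ) (C : Matrix (Fin K) (Fin K) ℝ)
    (Z : Fin m → Matrix (Fin K) (Fin K) ℝ) : ℝ :=
  (∑ i, mip (Z i) (diagonal ϱ * diagonal e * C * diagonal e)) +
    ∑ i, ∑ j ∈ Finset.Ioi i,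
      mip (Z i) (diagonal e * diagonal ϱ * Z j * diagonal e * C * diagonal e)

/-- The `ℓ₁`-penalized energy `f_β(Z) = f(Z) + β Σ_{i<j} ⟨X_i, X_j⟩`. -/
def fB {K m : ℕ} (e ϱ : Fin K → ℝ) (C : Matrix (Fin K) (Fin K) ℝ) (β : ℝ)
    (Z : Fin m → Matrix (Fin K) (Fin K) ℝ) : ℝ :=
  fE e ϱ C Z + β * ∑ i, ∑ j ∈ Finset.Ioi i, mip (Z i) (Z j)

/-- The block gradient
`∇_{X_i} f_β(Z) = ΛΞCΞ + Σ_{j<i} ΛΞX_jΞCΞ + Σ_{j>i} ΞΛX_jΞCΞ + β Σ_{j≠i} X_j`. -/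
def gradB {K m : ℕ} (e ϱ : Fin K → ℝ) (C : Matrix (Fin K) (Fin K) ℝ) (β : ℝ)
    (Z : Fin m → Matrix (Fin K) (Fin K) ℝ) (i : Fin m) : Matrix (Fin K) (Fin K) ℝ :=
  diagonal ϱ * diagonal e * C * diagonal e
    + ∑ j ∈ Finset.Iio i, diagonal ϱ * diagonal e * Z j * diagonal e * C * diagonal e
    + ∑ j ∈ Finset.Ioi i, diagonal e * diagonal ϱ * Z j * diagonal e * C * diagonal e
    + β • ∑ j ∈ Finset.univ.erase i, Z j

/-- `Z* ∈ S^{N−1}` is a KKT point of the penalized problem `(P_β)` if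
`⟨∇_{X_i} f_β(Z*), X − X*_i⟩ ≥ 0` for all `X ∈ S` and all blocks `i`. -/
def IsKKT {K m : ℕ} (e ϱ : Fin K → ℝ) (C : Matrix (Fin K) (Fin K) ℝ) (β : ℝ)
    (Z : Fin m → Matrix (Fin K) (Fin K) ℝ) : Prop :=
  (∀ i, Z i ∈ Sset e ϱ) ∧
    ∀ i, ∀ X ∈ Sset e ϱ, 0 ≤ mip (gradB e ϱ C β Z i) (X - Z i)

/-- The `i`-th block objective of PBCD at outer iterate `Zold` (with the already-updated
blocks taken from `Znew`):
`X ↦ f_β(Znew_{<i}, X, Zold_{>i}) + (σ/2)‖X − Zold_i‖_F²`. -/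
def blockObj {K m : ℕ} (e ϱ : Fin K → ℝ) (C : Matrix (Fin K) (Fin K) ℝ) (β σ : ℝ)
    (Zold Znew : Fin m → Matrix (Fin K) (Fin K) ℝ) (i : Fin m)
    (X : Matrix (Fin K) (Fin K) ℝ) : ℝ :=
  fB e ϱ C β (fun j => if j < i then Znew j else if j = i then X else Zold j)
    + σ / 2 * mip (X - Zold i) (X - Zold i)

/-- `Zseq` is an exact PBCD sequence: for every `k` and every block `i` (in order),
`X_i^{(k+1)}` is the (unique) global solution of the `i`-th block problem. -/
def IsPBCD {K m : ℕ} (e ϱ : Fin K → ℝ) (C : Matrix (Fin K) (Fin K) ℝ) (β σ : ℝ)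
    (Zseq : ℕ → Fin m → Matrix (Fin K) (Fin K) ℝ) : Prop :=
  ∀ k i, Zseq (k + 1) i ∈ Sset e ϱ ∧
    ∀ X ∈ Sset e ϱ,
      blockObj e ϱ C β σ (Zseq k) (Zseq (k + 1)) i (Zseq (k + 1) i) ≤
        blockObj e ϱ C β σ (Zseq k) (Zseq (k + 1)) i X

/-- `Zbar` is the block-optimal sequence of `Zseq`: `X̄_i^{(k+1)}` is the (unique) global
solution of the `i`-th block problem built from the iterates of `Zseq` themselves. -/
def IsBlockOpt {K m : ℕ} (e ϱ : Fin K → ℝ) (C : Matrix (Fin K) (Fin K) ℝ) (β σ : ℝ)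
    (Zseq Zbar : ℕ → Fin m → Matrix (Fin K) (Fin K) ℝ) : Prop :=
  ∀ k i, Zbar (k + 1) i ∈ Sset e ϱ ∧
    ∀ X ∈ Sset e ϱ,
      blockObj e ϱ C β σ (Zseq k) (Zseq (k + 1)) i (Zbar (k + 1) i) ≤
        blockObj e ϱ C β σ (Zseq k) (Zseq (k + 1)) i X

/-- Frobenius norm of a block tuple `Z ∈ (ℝ^{K×K})^m`. -/
def nZ {K m : ℕ} (Z : Fin m → Matrix (Fin K) (Fin K) ℝ) : ℝ :=
  Real.sqrt (∑ i, mip (Z i) (Z i))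

section Abstract

/-- finite-dimensional bilinear maps are bounded -/
lemma aux_bilin_bound {E F : Type*} [NormedAddCommGroup E] [NormedSpace ℝ E]
    [FiniteDimensional ℝ E] [NormedAddCommGroup F] [NormedSpace ℝ F] [FiniteDimensional ℝ F]
    (B : E →ₗ[ℝ] F →ₗ[ℝ] ℝ) :
    ∃ M : ℝ, 0 ≤ M ∧ ∀ x y, |B x y| ≤ M * ‖x‖ * ‖y‖ := by
  let T : E →ₗ[ℝ] (F →L[ℝ] ℝ) :=
    (LinearMap.toContinuousLinearMap : (F →ₗ[ℝ] ℝ) ≃ₗ[ℝ] (F →L[ℝ] ℝ)).toLinearMap ∘ₗ B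
  let T' := LinearMap.toContinuousLinearMap T
  refine ⟨‖T'‖, T'.opNorm_nonneg, fun x y => ?_⟩
  have h := T'.le_opNorm₂ x y
  exact h

lemma aux_rinv {V W : Type*} [NormedAddCommGroup V] [NormedSpace ℝ V] [FiniteDimensional ℝ V]
    [NormedAddCommGroup W] [NormedSpace ℝ W] (T : V →ₗ[ℝ] W) :
    ∃ C : ℝ, 0 ≤ C ∧ ∀ w, ∃ w', T w' = T w ∧ ‖w'‖ ≤ C * ‖T w‖ := by
  obtain ⟨R, hR⟩ := T.rangeRestrict.exists_rightInverse_of_surjective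
      (LinearMap.range_rangeRestrict T)
  let Rc := LinearMap.toContinuousLinearMap R
  refine ⟨‖Rc‖, Rc.opNorm_nonneg, fun w => ⟨Rc (T.rangeRestrict w), ?_, ?_⟩⟩
  · have := congrArg (fun L => ((L (T.rangeRestrict w) : LinearMap.range T) : W)) hR
    simpa [Rc] using this
  · exact Rc.le_opNorm _

/-- Quadratic on a vector space: near-critical points have near-critical values. -/
lemma aux_quad {V : Type*} [NormedAddCommGroup V] [NormedSpace ℝ V] [FiniteDimensional ℝ V]
    (g : V →ₗ[ℝ] ℝ) (B : V →ₗ[ℝ] V →ₗ[ℝ] ℝ) :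
    ∃ c0 : ℝ, 0 < c0 ∧ ∃ C : ℝ, 0 ≤ C ∧ ∃ v : ℝ, ∀ u : V, ∀ τ : ℝ, 0 ≤ τ →
      (∀ d, |g d + B u d + B d u| ≤ τ * ‖d‖) → c0 ≤ τ ∨ |g u + B u u - v| ≤ C * τ ^ 2 := by
  let cl := (LinearMap.toContinuousLinearMap : (V →ₗ[ℝ] ℝ) ≃ₗ[ℝ] (V →L[ℝ] ℝ))
  let T : V →ₗ[ℝ] (V →L[ℝ] ℝ) := cl.toLinearMap ∘ₗ (B + B.flip)
  have hT : ∀ u d, T u d = B u d + B d u := fun u d => by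
    simp [T, cl]
  let G : V →L[ℝ] ℝ := cl g
  have hG : ∀ d, G d = g d := fun d => by simp [G, cl]
  by_cases hmem : -G ∈ LinearMap.range T
  · obtain ⟨u0, hu0⟩ := hmem
    obtain ⟨Cr, hCr, hR⟩ := aux_rinv T
    refine ⟨1, one_pos, Cr, hCr, g u0 + B u0 u0, fun u τ hτ h => Or.inr ?_⟩
    obtain ⟨w, rfl⟩ : ∃ w, u = u0 + w := ⟨u - u0, by abel⟩
    have hc : ∀ d, g d + B u0 d + B d u0 = 0 := fun d => by
      have := congrArg (fun L : V →L[ℝ] ℝ => L d) hu0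
      simp only [hT, _root_.neg_apply, hG] at this
      linarith
    have hTw : ‖T w‖ ≤ τ := by
      refine ContinuousLinearMap.opNorm_le_bound _ hτ fun d => ?_
      have h1 := h d
      have h2 := hc d
      rw [Real.norm_eq_abs, hT]
      simp only [map_add, LinearMap.add_apply] at h1
      convert h1 using 2
      linarith
    obtain ⟨w', hTw', hw0⟩ := hR w
    have hw' : ‖w'‖ ≤ Cr * τ := by
      refine hw0.trans ?_
      gcongr
    have e1 : T w w = T w w' := by
      have : T w' w = T w w := by rw [hTw']
      rw [← this, hT, hT]; ring
    have e2 : |T w w'| ≤ τ * (Cr * τ) := by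
      refine (((T w).le_opNorm w').trans ?_)
      gcongr
    have e3 : 0 ≤ Cr * τ ^ 2 := by positivity
    have e4 := hT w w
    have e5 := hc w
    simp only [map_add, LinearMap.add_apply]
    rw [abs_le] at e2 ⊢
    constructor <;> nlinarith
  · have hcl : IsClosed ((LinearMap.range T : Submodule ℝ (V →L[ℝ] ℝ)) : Set (V →L[ℝ] ℝ)) :=
      Submodule.closed_of_finiteDimensional _
    refine ⟨Metric.infDist (-G) (LinearMap.range T : Submodule ℝ (V →L[ℝ] ℝ)), ?_, 0, le_rfl, 0,
      fun u τ hτ h => Or.inl ?_⟩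
    · exact (hcl.notMem_iff_infDist_pos ⟨0, Submodule.zero_mem _⟩).1 hmem
    · refine (Metric.infDist_le_dist_of_mem (LinearMap.mem_range_self T u)).trans ?_
      rw [dist_eq_norm]
      refine ContinuousLinearMap.opNorm_le_bound _ hτ fun d => ?_
      have h1 := h d
      rw [Real.norm_eq_abs, ← abs_neg]
      simp only [_root_.sub_apply, _root_.neg_apply, hT, hG]
      convert h1 using 2
      ring

/-- Łojasiewicz inequality with exponent 1/2 for quadratics on a set with finitely many faces. -/
lemma aux_KL {E : Type*} [NormedAddCommGroup E] [NormedSpace ℝ E] [FiniteDimensional ℝ E]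
    {I : Type*} [Finite I] (P : Set E) (patt : E → I) (V : I → Submodule ℝ E)
    (h1 : ∀ Z ∈ P, ∀ W ∈ P, patt Z = patt W → W - Z ∈ V (patt Z))
    (h2 : ∀ Z ∈ P, ∀ D ∈ V (patt Z), ∃ t : ℝ, 0 < t ∧ Z + t • D ∈ P)
    (f : E → ℝ) (g : E → E →ₗ[ℝ] ℝ) (B : E →ₗ[ℝ] E →ₗ[ℝ] ℝ)
    (hf : ∀ Z D, f (Z + D) = f Z + g Z D + B D D)
    (hg : ∀ Z D W, g (Z + D) W = g Z W + B D W + B W D) (F : ℝ) :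
    ∃ η : ℝ, 0 < η ∧ ∃ c : ℝ, 0 ≤ c ∧ ∀ Z ∈ P, f Z < F + η → ∀ τ : ℝ, 0 ≤ τ →
      (∀ W ∈ P, -(τ * ‖W - Z‖) ≤ g Z (W - Z)) → f Z - F ≤ c * τ ^ 2 := by
  have key : ∀ s : I, ∃ η : ℝ, 0 < η ∧ ∃ c : ℝ, 0 ≤ c ∧ ∀ Z ∈ P, patt Z = s →
      f Z < F + η → ∀ τ : ℝ, 0 ≤ τ →
      (∀ W ∈ P, -(τ * ‖W - Z‖) ≤ g Z (W - Z)) → f Z - F ≤ c * τ ^ 2 := by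
    intro s
    by_cases hs : ∃ Z0 ∈ P, patt Z0 = s
    · obtain ⟨Z0, hZ0, rfl⟩ := hs
      let U := V (patt Z0)
      obtain ⟨c0, hc0, C, hC, v, hv⟩ := aux_quad ((g Z0).comp U.subtype)
        ((B.comp U.subtype).flip.comp U.subtype).flip
      have main : ∀ Z ∈ P, patt Z = patt Z0 → ∀ τ : ℝ, 0 ≤ τ →
          (∀ W ∈ P, -(τ * ‖W - Z‖) ≤ g Z (W - Z)) → c0 ≤ τ ∨ |f Z - (f Z0 + v)| ≤ C * τ ^ 2 := by
        intro Z hZ hp τ hτ h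
        have hm := h1 Z0 hZ0 Z hZ hp.symm
        have := hv ⟨Z - Z0, hm⟩ τ hτ
        have hZe : Z = Z0 + (Z - Z0) := by abel
        have lower : ∀ d ∈ U, -(τ * ‖d‖) ≤ g Z d := by
          intro d hd
          obtain ⟨t, ht, htP⟩ := h2 Z hZ d (by rw [hp]; exact hd)
          have := h _ htP
          simp only [add_sub_cancel_left, norm_smul, map_smul, smul_eq_mul, Real.norm_eq_abs,
            abs_of_pos ht] at this
          have : t * (-(τ * ‖d‖)) ≤ t * g Z d := by linarith
          exact le_of_mul_le_mul_left this ht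
        have hfz := hf Z0 (Z - Z0)
        rw [← hZe] at hfz
        have hside := this ?_
        · rcases hside with h | h
          · exact Or.inl h
          · right
            refine le_trans (le_of_eq ?_) h
            rw [hfz]
            congr 1
            change _ = g Z0 (Z - Z0) + B (Z - Z0) (Z - Z0) - v
            ring
        · rintro ⟨d, hd⟩
          have e := hg Z0 (Z - Z0) d
          rw [← hZe] at e
          have l1 := lower d hd
          have l2 := lower (-d) (U.neg_mem hd)
          rw [norm_neg, map_neg] at l2
          rw [e] at l1 l2
          simp at l1 l2
          simp
          rw [abs_le]
          constructor <;> linarith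
      by_cases hvF : f Z0 + v ≤ F
      · refine ⟨1, one_pos, C + 1 / c0 ^ 2, by positivity, fun Z hZ hp hlt τ hτ h => ?_⟩
        rcases main Z hZ hp τ hτ h with h | h
        · have : 1 ≤ 1 / c0 ^ 2 * τ ^ 2 := by
            rw [one_div, ← div_eq_inv_mul, le_div_iff₀ (by positivity), one_mul]
            gcongr
          nlinarith [mul_nonneg hC (sq_nonneg τ)]
        · have : 0 ≤ 1 / c0 ^ 2 * τ ^ 2 := by positivity
          have := (abs_le.1 h).2
          nlinarith
      · push Not at hvF
        refine ⟨(f Z0 + v - F) / 2, by linarith, C + (f Z0 + v - F) / 2 / c0 ^ 2, ?_, ?_⟩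
        · have : 0 < f Z0 + v - F := by linarith
          positivity
        · intro Z hZ hp hlt τ hτ h
          set q := f Z0 + v - F with hq
          have hq0 : 0 < q := by linarith
          rcases main Z hZ hp τ hτ h with h | h
          · have : q / 2 ≤ q / 2 / c0 ^ 2 * τ ^ 2 := by
              rw [div_mul_eq_mul_div, le_div_iff₀ (by positivity)]
              gcongr
            nlinarith [mul_nonneg hC (sq_nonneg τ)]
          · have : 0 ≤ q / 2 / c0 ^ 2 * τ ^ 2 := by positivity
            have := (abs_le.1 h).1
            nlinarith
    · exact ⟨1, one_pos, 0, le_rfl, fun Z hZ hp => (hs ⟨Z, hZ, hp⟩).elim⟩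
  choose η hη c hc h using key
  have := Fintype.ofFinite I
  by_cases hI : Nonempty I
  · obtain ⟨i0, hi0⟩ := Finite.exists_min η
    refine ⟨η i0, hη i0, ∑ i, c i, Finset.sum_nonneg fun i _ => hc i,
      fun Z hZ hlt τ hτ hh => ?_⟩
    refine (h (patt Z) Z hZ rfl (hlt.trans_le (by linarith [hi0 (patt Z)])) τ hτ hh).trans ?_
    gcongr
    exact Finset.single_le_sum (fun i _ => hc i) (Finset.mem_univ _)
  · exact ⟨1, one_pos, 0, le_rfl, fun Z => (hI ⟨patt Z⟩).elim⟩

/-- scalar estimate -/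
lemma aux_scalar {A b κ d x u En s : ℝ} (hA : 0 ≤ A) (hb : 0 ≤ b) (hκ : 0 ≤ κ)
    (hu : 0 ≤ u) (hE : 0 ≤ En) (hs : s ≤ κ * (d + En)) (hx : x = u + En)
    (h : d ^ 2 ≤ A * (u * (u + 2 * s)) + b * En * d) :
    d ≤ (1 + A + 4 * A * κ + b) * x := by
  by_contra hcon
  push Not at hcon
  have hx0 : 0 ≤ x := by linarith
  have hAk : 0 ≤ A * κ := mul_nonneg hA hκ
  have hxd : x ≤ d := by nlinarith [mul_nonneg hA hx0, mul_nonneg hAk hx0, mul_nonneg hb hx0]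
  have hux : u ≤ x := by linarith
  have hEx : En ≤ x := by linarith
  have hdpos : 0 < d := by
    refine lt_of_le_of_lt ?_ hcon
    positivity
  have a1 : u * u ≤ x * d := by gcongr; linarith
  have a2 : u * s ≤ x * (κ * (2 * d)) := by
    calc u * s ≤ u * (κ * (d + En)) := by gcongr
      _ ≤ x * (κ * (2 * d)) := by gcongr; linarith
  have a3 : b * En * d ≤ b * x * d := by gcongr
  have a4 : d * d ≤ ((A + 4 * A * κ + b) * x) * d := by
    have := mul_le_mul_of_nonneg_left a1 hA
    have := mul_le_mul_of_nonneg_left a2 hA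
    nlinarith
  have a5 := le_of_mul_le_mul_right a4 hdpos
  nlinarith

/-- Abstract convergence of a descent sequence with summable errors. -/
lemma aux_conv {E : Type*} [NormedAddCommGroup E] [CompleteSpace E]
    (Y : ℕ → E) (r En : ℕ → ℝ) (A b κ : ℝ) (hA : 0 ≤ A) (hb : 0 ≤ b) (hκ : 0 ≤ κ)
    (hE : ∀ k, 0 ≤ En k) (hEs : Summable En) (hr : ∀ k, 0 ≤ r k) (hmono : ∀ k, r (k + 1) ≤ r k)
    (hdesc : ∀ k, ‖Y (k + 1) - Y k‖ ^ 2 ≤ A * (r k - r (k + 1)) + b * En k * ‖Y (k + 1) - Y k‖)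
    (hKL : ∀ k, r (k + 1) ≤ (κ * (‖Y (k + 1) - Y k‖ + En k)) ^ 2) :
    ∃ Yl, Tendsto Y atTop (𝓝 Yl) ∧ Tendsto r atTop (𝓝 0) := by
  set d : ℕ → ℝ := fun k => ‖Y (k + 1) - Y k‖ with hd
  set s : ℕ → ℝ := fun k => √(r k) with hs
  have hsmono : ∀ k, s (k + 1) ≤ s k := fun k => Real.sqrt_le_sqrt (hmono k)
  have hs0 : ∀ k, 0 ≤ s k := fun k => Real.sqrt_nonneg _
  have hsq : ∀ k, s k ^ 2 = r k := fun k => Real.sq_sqrt (hr k)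
  have hd0 : ∀ k, 0 ≤ d k := fun k => norm_nonneg _
  have bound : ∀ k, d k ≤ (1 + A + 4 * A * κ + b) * ((s k - s (k + 1)) + En k) := by
    intro k
    refine aux_scalar (s := s (k + 1)) hA hb hκ (by linarith [hsmono k]) (hE k) ?_ rfl ?_
    · exact Real.sqrt_le_iff.2 ⟨mul_nonneg hκ (add_nonneg (hd0 k) (hE k)), hKL k⟩
    · refine (hdesc k).trans (le_of_eq ?_)
      rw [← hsq k, ← hsq (k + 1)]
      ring
  have hsum : Summable (fun k => s k - s (k + 1)) := by
    refine summable_of_sum_range_le (c := s 0) (fun k => by linarith [hsmono k]) fun n => ?_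
    rw [Finset.sum_range_sub']
    linarith [hs0 n]
  have hdsum : Summable d :=
    Summable.of_nonneg_of_le hd0 bound ((hsum.add hEs).mul_left _)
  have hcau : CauchySeq Y := by
    refine cauchySeq_of_summable_dist ?_
    refine hdsum.congr fun k => ?_
    rw [dist_comm, dist_eq_norm]
  obtain ⟨Yl, hY⟩ := cauchySeq_tendsto_of_complete hcau
  refine ⟨Yl, hY, ?_⟩
  rw [← tendsto_add_atTop_iff_nat 1]
  refine squeeze_zero (fun k => hr _) hKL ?_
  have := ((hdsum.tendsto_atTop_zero.add hEs.tendsto_atTop_zero).const_mul κ).pow 2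
  simpa using this


variable {H : Type*} [NormedAddCommGroup H] [NormedSpace ℝ H] {m : ℕ}

/-- linear part on tuples -/
def qL (ℓ : H →ₗ[ℝ] ℝ) : (Fin m → H) →ₗ[ℝ] ℝ := ∑ i, ℓ ∘ₗ LinearMap.proj i

/-- bilinear part on tuples -/
def qB (φ : H →ₗ[ℝ] H →ₗ[ℝ] ℝ) : (Fin m → H) →ₗ[ℝ] (Fin m → H) →ₗ[ℝ] ℝ :=
  ∑ i, ∑ j ∈ Finset.Ioi i, φ.compl₁₂ (LinearMap.proj i) (LinearMap.proj j)

/-- abstract objective -/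
def qF (ℓ : H →ₗ[ℝ] ℝ) (φ : H →ₗ[ℝ] H →ₗ[ℝ] ℝ) (Z : Fin m → H) : ℝ :=
  (∑ i, ℓ (Z i)) + ∑ i, ∑ j ∈ Finset.Ioi i, φ (Z i) (Z j)

/-- abstract block gradient -/
def qG (ℓ : H →ₗ[ℝ] ℝ) (φ : H →ₗ[ℝ] H →ₗ[ℝ] ℝ) (A B : Fin m → H) (i : Fin m) (X : H) : ℝ :=
  ℓ X + ∑ j ∈ Finset.Iio i, φ (A j) X + ∑ j ∈ Finset.Ioi i, φ X (B j)

/-- abstract mixed tuple -/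
def qmix (Zold Znew : Fin m → H) (i : Fin m) (X : H) : Fin m → H :=
  fun j => if j < i then Znew j else if j = i then X else Zold j

/-- abstract gradient -/
def qgrad (ℓ : H →ₗ[ℝ] ℝ) (φ : H →ₗ[ℝ] H →ₗ[ℝ] ℝ) (Z : Fin m → H) : (Fin m → H) →ₗ[ℝ] ℝ :=
  qL ℓ + qB φ Z + (qB φ).flip Z

lemma qL_apply (ℓ : H →ₗ[ℝ] ℝ) (Z : Fin m → H) : qL ℓ Z = ∑ i, ℓ (Z i) := by
  simp [qL]

lemma qB_apply (φ : H →ₗ[ℝ] H →ₗ[ℝ] ℝ) (Z W : Fin m → H) :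
    qB φ Z W = ∑ i, ∑ j ∈ Finset.Ioi i, φ (Z i) (W j) := by
  simp [qB, LinearMap.sum_apply]

lemma qF_eq (ℓ : H →ₗ[ℝ] ℝ) (φ : H →ₗ[ℝ] H →ₗ[ℝ] ℝ) (Z : Fin m → H) :
    qF ℓ φ Z = qL ℓ Z + qB φ Z Z := by
  rw [qL_apply, qB_apply, qF]

lemma qswap (F : Fin m → Fin m → ℝ) :
    ∑ i, ∑ j ∈ Finset.Iio i, F j i = ∑ i, ∑ j ∈ Finset.Ioi i, F i j := by
  apply Finset.sum_comm'
  simp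

lemma qgrad_apply (ℓ : H →ₗ[ℝ] ℝ) (φ : H →ₗ[ℝ] H →ₗ[ℝ] ℝ) (Z W : Fin m → H) :
    qgrad ℓ φ Z W = ∑ i, qG ℓ φ Z Z i (W i) := by
  simp only [qgrad, LinearMap.add_apply, LinearMap.flip_apply, qL_apply, qB_apply, qG,
    Finset.sum_add_distrib]
  rw [qswap (fun i j => φ (Z i) (W j))]

lemma qF_add (ℓ : H →ₗ[ℝ] ℝ) (φ : H →ₗ[ℝ] H →ₗ[ℝ] ℝ) (Z D : Fin m → H) :
    qF ℓ φ (Z + D) = qF ℓ φ Z + qgrad ℓ φ Z D + qB φ D D := by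
  simp only [qF_eq, qgrad, LinearMap.add_apply, LinearMap.flip_apply, map_add]
  ring

lemma qgrad_add (ℓ : H →ₗ[ℝ] ℝ) (φ : H →ₗ[ℝ] H →ₗ[ℝ] ℝ) (Z D W : Fin m → H) :
    qgrad ℓ φ (Z + D) W = qgrad ℓ φ Z W + qB φ D W + qB φ W D := by
  simp only [qgrad, LinearMap.add_apply, LinearMap.flip_apply, map_add]
  ring

lemma qF_sub (ℓ : H →ₗ[ℝ] ℝ) (φ : H →ₗ[ℝ] H →ₗ[ℝ] ℝ) (n o : Fin m → H) :
    qF ℓ φ n - qF ℓ φ o = ∑ i, qG ℓ φ n o i (n i - o i) := by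
  simp only [qG, Finset.sum_add_distrib, qF]
  rw [qswap (fun i j => φ (n i) (n j - o j))]
  simp only [map_sub, LinearMap.sub_apply, Finset.sum_sub_distrib]
  ring

lemma qF_mix_sub (ℓ : H →ₗ[ℝ] ℝ) (φ : H →ₗ[ℝ] H →ₗ[ℝ] ℝ) (Zo Zn : Fin m → H) (i : Fin m)
    (X X' : H) :
    qF ℓ φ (qmix Zo Zn i X) - qF ℓ φ (qmix Zo Zn i X') = qG ℓ φ Zn Zo i (X - X') := by
  rw [qF_sub, Finset.sum_eq_single i]
  · have e1 : ∀ j ∈ Finset.Iio i, qmix Zo Zn i X j = Zn j := fun j hj => by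
      simp [qmix, Finset.mem_Iio.1 hj]
    have e2 : ∀ j ∈ Finset.Ioi i, qmix Zo Zn i X' j = Zo j := fun j hj => by
      have := Finset.mem_Ioi.1 hj
      simp [qmix, this.not_gt, this.ne']
    have e3 : ∀ Y, qmix Zo Zn i Y i = Y := fun Y => by simp [qmix]
    rw [e3, e3, qG, qG]
    congr 1
    · congr 1
      exact Finset.sum_congr rfl fun j hj => by rw [e1 j hj]
    · exact Finset.sum_congr rfl fun j hj => by rw [e2 j hj]
  · intro j _ hj
    have : qmix Zo Zn i X j - qmix Zo Zn i X' j = 0 := by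
      simp [qmix, hj]
    rw [this]
    simp [qG]
  · simp

lemma qG_diff (ℓ : H →ₗ[ℝ] ℝ) (φ : H →ₗ[ℝ] H →ₗ[ℝ] ℝ) (M : ℝ) (hM : 0 ≤ M)
    (hφ : ∀ x y, |φ x y| ≤ M * ‖x‖ * ‖y‖) (A B A' B' : Fin m → H) (i : Fin m) (X : H) :
    |qG ℓ φ A B i X - qG ℓ φ A' B' i X| ≤ m * M * (‖A - A'‖ + ‖B - B'‖) * ‖X‖ := by
  have e : qG ℓ φ A B i X - qG ℓ φ A' B' i X =
      ∑ j ∈ Finset.Iio i, φ (A j - A' j) X + ∑ j ∈ Finset.Ioi i, φ X (B j - B' j) := by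
    simp only [qG, map_sub, LinearMap.sub_apply, Finset.sum_sub_distrib]
    ring
  rw [e]
  have cardle : ∀ s : Finset (Fin m), s.card ≤ m := fun s => by
    have := Finset.card_le_univ s
    rw [Fintype.card_fin] at this
    exact this
  have b1 : |∑ j ∈ Finset.Iio i, φ (A j - A' j) X| ≤ m * (M * ‖A - A'‖ * ‖X‖) := by
    refine (Finset.abs_sum_le_sum_abs _ _).trans ?_
    refine (Finset.sum_le_card_nsmul _ _ (M * ‖A - A'‖ * ‖X‖) fun j _ => ?_).trans ?_
    · refine (hφ _ _).trans ?_
      gcongr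
      exact norm_le_pi_norm (A - A') j
    · rw [nsmul_eq_mul]
      gcongr
      exact cardle _
  have b2 : |∑ j ∈ Finset.Ioi i, φ X (B j - B' j)| ≤ m * (M * ‖X‖ * ‖B - B'‖) := by
    refine (Finset.abs_sum_le_sum_abs _ _).trans ?_
    refine (Finset.sum_le_card_nsmul _ _ (M * ‖X‖ * ‖B - B'‖) fun j _ => ?_).trans ?_
    · refine (hφ _ _).trans ?_
      gcongr
      exact norm_le_pi_norm (B - B') j
    · rw [nsmul_eq_mul]
      gcongr
      exact cardle _
  refine (abs_add_le _ _).trans ((add_le_add b1 b2).trans (le_of_eq ?_))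
  ring

lemma aux_step (ℓ : H →ₗ[ℝ] ℝ) (φ ip : H →ₗ[ℝ] H →ₗ[ℝ] ℝ) (M : ℝ) (hM : 0 ≤ M)
    (hφ : ∀ x y, |φ x y| ≤ M * ‖x‖ * ‖y‖) (hip : ∀ x y, |ip x y| ≤ M * ‖x‖ * ‖y‖)
    (hsym : ∀ x y, ip x y = ip y x) (hpos : ∀ x, ‖x‖ ^ 2 ≤ ip x x)
    (S : Set H) (hS : Convex ℝ S) (σ : ℝ) (hσ : 0 < σ) (Zo Zn Yo Yn : Fin m → H)
    (hYo : ∀ i, Yo i ∈ S) (hYn : ∀ i, Yn i ∈ S)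
    (hopt : ∀ i, ∀ X ∈ S, qF ℓ φ (qmix Zo Zn i (Yn i)) + σ / 2 * ip (Yn i - Zo i) (Yn i - Zo i)
      ≤ qF ℓ φ (qmix Zo Zn i X) + σ / 2 * ip (X - Zo i) (X - Zo i)) :
    σ / 2 * ‖Yn - Yo‖ ^ 2 ≤ qF ℓ φ Yo - qF ℓ φ Yn
      + m * ((m + σ) * M) * (‖Yo - Zo‖ + ‖Yn - Zn‖) * ‖Yn - Yo‖ ∧
    ∀ W : Fin m → H, (∀ i, W i ∈ S) →
      -((m * ((m + σ) * M) * (‖Yn - Yo‖ + (‖Yo - Zo‖ + ‖Yn - Zn‖))) * ‖W - Yn‖)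
        ≤ qgrad ℓ φ Yn (W - Yn) := by
  have hopt' : ∀ i, ∀ X ∈ S, 0 ≤ qG ℓ φ Zn Zo i (X - Yn i) + σ / 2 * ip (X - Yn i) (X - Yn i)
      + σ * ip (Yn i - Zo i) (X - Yn i) := by
    intro i X hX
    have h := hopt i X hX
    have h2 := qF_mix_sub ℓ φ Zo Zn i X (Yn i)
    have h3 : X - Zo i = (X - Yn i) + (Yn i - Zo i) := by abel
    rw [h3] at h
    generalize X - Yn i = a at *
    generalize Yn i - Zo i = b at *
    simp only [map_add, LinearMap.add_apply] at h
    rw [hsym a b] at h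
    linarith
  constructor
  · have per : ∀ i, qG ℓ φ Yn Yo i (Yn i - Yo i) ≤ -(σ / 2 * ‖Yn i - Yo i‖ ^ 2)
        + (m + σ) * M * (‖Yo - Zo‖ + ‖Yn - Zn‖) * ‖Yn - Yo‖ := by
      intro i
      have h := hopt i (Yo i) (hYo i)
      have h2 := qF_mix_sub ℓ φ Zo Zn i (Yn i) (Yo i)
      have h3 : Yn i - Zo i = (Yn i - Yo i) + (Yo i - Zo i) := by abel
      rw [h3] at h
      have d1 := (abs_le.1 (qG_diff ℓ φ M hM hφ Yn Yo Zn Zo i (Yn i - Yo i))).2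
      have d2 := (abs_le.1 (hip (Yn i - Yo i) (Yo i - Zo i))).1
      have d3 := hpos (Yn i - Yo i)
      have n1 : ‖Yn i - Yo i‖ ≤ ‖Yn - Yo‖ := norm_le_pi_norm (Yn - Yo) i
      have n2 : ‖Yo i - Zo i‖ ≤ ‖Yo - Zo‖ := norm_le_pi_norm (Yo - Zo) i
      generalize Yn i - Yo i = a at *
      generalize Yo i - Zo i = b at *
      simp only [map_add, LinearMap.add_apply] at h
      rw [hsym b a] at h
      have k1 : m * M * (‖Yn - Zn‖ + ‖Yo - Zo‖) * ‖a‖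
          ≤ m * M * (‖Yn - Zn‖ + ‖Yo - Zo‖) * ‖Yn - Yo‖ := by gcongr
      have k2 : M * ‖a‖ * ‖b‖ ≤ M * ‖Yn - Yo‖ * (‖Yo - Zo‖ + ‖Yn - Zn‖) := by
        gcongr
        linarith [norm_nonneg (Yn - Zn)]
      have k3 := mul_le_mul_of_nonneg_left (k2.trans' (by linarith : -(ip a b) ≤ _)) hσ.le
      have k4 := mul_le_mul_of_nonneg_left d3 (by positivity : 0 ≤ σ / 2)
      nlinarith
    have hsum := Finset.sum_le_sum fun i (_ : i ∈ Finset.univ) => per i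
    rw [← qF_sub, Finset.sum_add_distrib, Finset.sum_neg_distrib, ← Finset.mul_sum,
      Finset.sum_const, Finset.card_univ, Fintype.card_fin, nsmul_eq_mul] at hsum
    have hn : ‖Yn - Yo‖ ^ 2 ≤ ∑ i, ‖Yn i - Yo i‖ ^ 2 := by
      have h0 : 0 ≤ ∑ i, ‖Yn i - Yo i‖ ^ 2 := Finset.sum_nonneg fun i _ => sq_nonneg _
      rw [← Real.le_sqrt (norm_nonneg _) h0]
      refine (pi_norm_le_iff_of_nonneg (Real.sqrt_nonneg _)).2 fun i => ?_
      refine Real.le_sqrt_of_sq_le ?_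
      exact Finset.single_le_sum (f := fun i => ‖Yn i - Yo i‖ ^ 2)
        (fun i _ => sq_nonneg _) (Finset.mem_univ i)
    have := mul_le_mul_of_nonneg_left hn (by positivity : 0 ≤ σ / 2)
    linarith
  · intro W hW
    have per : ∀ i, -((m + σ) * M * (‖Yn - Yo‖ + (‖Yo - Zo‖ + ‖Yn - Zn‖)) * ‖W - Yn‖)
        ≤ qG ℓ φ Yn Yn i ((W - Yn) i) := by
      intro i
      have fo : 0 ≤ qG ℓ φ Zn Zo i (W i - Yn i) + σ * ip (Yn i - Zo i) (W i - Yn i) := by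
        by_contra hcon
        push Not at hcon
        set p := qG ℓ φ Zn Zo i (W i - Yn i) + σ * ip (Yn i - Zo i) (W i - Yn i) with hp
        set q := ip (W i - Yn i) (W i - Yn i) with hq
        have hq0 : 0 ≤ q := (sq_nonneg _).trans (hpos _)
        have ht : ∀ t : ℝ, 0 < t → t ≤ 1 → 0 ≤ p + σ / 2 * t * q := by
          intro t ht ht1
          have hmem : Yn i + t • (W i - Yn i) ∈ S :=
            hS.add_smul_sub_mem (hYn i) (hW i) ⟨ht.le, ht1⟩
          have := hopt' i _ hmem
          rw [add_sub_cancel_left] at this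
          have hs : qG ℓ φ Zn Zo i (t • (W i - Yn i)) = t * qG ℓ φ Zn Zo i (W i - Yn i) := by
            simp only [qG, map_smul, LinearMap.smul_apply, smul_eq_mul, mul_add, Finset.mul_sum]
          rw [hs] at this
          simp only [map_smul, LinearMap.smul_apply, smul_eq_mul] at this
          have : t * 0 ≤ t * (p + σ / 2 * t * q) := by
            rw [hp, hq]; linarith
          exact le_of_mul_le_mul_left this ht
        have hlim : Tendsto (fun t : ℝ => p + σ / 2 * t * q) (𝓝[>] 0) (𝓝 (p + σ / 2 * 0 * q)) := by
          refine Tendsto.mono_left ?_ nhdsWithin_le_nhds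
          exact (Continuous.tendsto (by fun_prop) 0)
        have := ge_of_tendsto hlim (b := 0) (by
          filter_upwards [Ioc_mem_nhdsGT (zero_lt_one' ℝ)] with t ht'
          exact ht t ht'.1 ht'.2)
        linarith
      have d1 := (abs_le.1 (qG_diff ℓ φ M hM hφ Yn Yn Zn Zo i (W i - Yn i))).1
      have d2 := (abs_le.1 (hip (Yn i - Zo i) (W i - Yn i))).2
      have n1 : ‖W i - Yn i‖ ≤ ‖W - Yn‖ := norm_le_pi_norm (W - Yn) i
      have n2 : ‖Yn i - Zo i‖ ≤ ‖Yn - Zo‖ := norm_le_pi_norm (Yn - Zo) i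
      have n3 : ‖Yn - Zo‖ ≤ ‖Yn - Yo‖ + ‖Yo - Zo‖ := norm_sub_le_norm_sub_add_norm_sub _ _ _
      have n4 := norm_nonneg (Yn - Zn)
      set T := ‖Yn - Yo‖ + (‖Yo - Zo‖ + ‖Yn - Zn‖) with hT
      have k1 : m * M * (‖Yn - Zn‖ + ‖Yn - Zo‖) * ‖W i - Yn i‖ ≤ m * M * T * ‖W - Yn‖ := by
        gcongr
        linarith
      have k2 : M * ‖Yn i - Zo i‖ * ‖W i - Yn i‖ ≤ M * T * ‖W - Yn‖ := by
        gcongr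
        linarith
      have k3 := mul_le_mul_of_nonneg_left (d2.trans k2) hσ.le
      rw [Pi.sub_apply]
      nlinarith
    have hsum := Finset.sum_le_sum fun i (_ : i ∈ Finset.univ) => per i
    rw [← qgrad_apply, Finset.sum_const, Finset.card_univ, Fintype.card_fin, nsmul_eq_mul] at hsum
    linarith

lemma qF_continuous [FiniteDimensional ℝ H] (ℓ : H →ₗ[ℝ] ℝ) (φ : H →ₗ[ℝ] H →ₗ[ℝ] ℝ) :
    Continuous (fun Z : Fin m → H => qF ℓ φ Z) := by
  have h1 : Continuous ℓ := ℓ.continuous_of_finiteDimensional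
  let T : H →ₗ[ℝ] (H →L[ℝ] ℝ) :=
    (LinearMap.toContinuousLinearMap : (H →ₗ[ℝ] ℝ) ≃ₗ[ℝ] (H →L[ℝ] ℝ)).toLinearMap ∘ₗ φ
  have h2 : Continuous (fun p : H × H => φ p.1 p.2) :=
    (LinearMap.toContinuousLinearMap T).continuous₂
  unfold qF
  refine Continuous.add ?_ ?_
  · exact continuous_finsetSum _ fun i _ => h1.comp (continuous_apply i)
  · refine continuous_finsetSum _ fun i _ => continuous_finsetSum _ fun j _ => ?_
    have h3 : Continuous (fun Z : Fin m → H => (Z i, Z j)) :=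
      (continuous_apply i).prodMk (continuous_apply j)
    exact h2.comp h3

theorem aux_main [FiniteDimensional ℝ H] (ℓ : H →ₗ[ℝ] ℝ) (φ ip : H →ₗ[ℝ] H →ₗ[ℝ] ℝ)
    (hsym : ∀ x y, ip x y = ip y x) (hpos : ∀ x, ‖x‖ ^ 2 ≤ ip x x)
    (S : Set H) (hS : Convex ℝ S) (hScl : IsClosed S) (σ : ℝ) (hσ : 0 < σ)
    {I : Type*} [Finite I] (patt : (Fin m → H) → I) (V : I → Submodule ℝ (Fin m → H))
    (h1 : ∀ Z : Fin m → H, (∀ i, Z i ∈ S) → ∀ W : Fin m → H, (∀ i, W i ∈ S) →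
      patt Z = patt W → W - Z ∈ V (patt Z))
    (h2 : ∀ Z : Fin m → H, (∀ i, Z i ∈ S) → ∀ D ∈ V (patt Z),
      ∃ t : ℝ, 0 < t ∧ ∀ i, (Z + t • D) i ∈ S)
    (Zs : Fin m → H) (hmin : ∀ Z : Fin m → H, (∀ i, Z i ∈ S) → qF ℓ φ Zs ≤ qF ℓ φ Z) :
    ∃ ε : ℝ, 0 < ε ∧ ∃ δ : ℝ, 0 < δ ∧ ∀ Zseq Zbar : ℕ → Fin m → H,
      (∀ k i, Zbar (k + 1) i ∈ S ∧ ∀ X ∈ S,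
        qF ℓ φ (qmix (Zseq k) (Zseq (k + 1)) i (Zbar (k + 1) i))
          + σ / 2 * ip (Zbar (k + 1) i - Zseq k i) (Zbar (k + 1) i - Zseq k i)
        ≤ qF ℓ φ (qmix (Zseq k) (Zseq (k + 1)) i X) + σ / 2 * ip (X - Zseq k i) (X - Zseq k i)) →
      (∀ k, 1 ≤ k → qF ℓ φ (Zbar (k + 1)) ≤ qF ℓ φ (Zbar k)) →
      Summable (fun k => ‖Zbar (k + 1) - Zseq (k + 1)‖) →
      (∑' k, ‖Zbar (k + 1) - Zseq (k + 1)‖) ≤ δ →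
      (∀ i, Zseq 0 i ∈ S) → ‖Zseq 0 - Zs‖ < ε →
      ∃ Zopt : Fin m → H, (∀ i, Zopt i ∈ S) ∧
        (∀ Z : Fin m → H, (∀ i, Z i ∈ S) → qF ℓ φ Zopt ≤ qF ℓ φ Z) ∧
        Tendsto Zseq atTop (𝓝 Zopt) := by
  obtain ⟨M1, hM1, hφ1⟩ := aux_bilin_bound φ
  obtain ⟨M2, hM2, hip2⟩ := aux_bilin_bound ip
  set M := M1 + M2 with hMdef
  have hM : 0 ≤ M := by positivity
  have hφ : ∀ x y, |φ x y| ≤ M * ‖x‖ * ‖y‖ := fun x y => (hφ1 x y).trans (by gcongr; linarith)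
  have hip : ∀ x y, |ip x y| ≤ M * ‖x‖ * ‖y‖ := fun x y => (hip2 x y).trans (by gcongr; linarith)
  obtain ⟨η, hη, c, hc, hKL⟩ := aux_KL {Z : Fin m → H | ∀ i, Z i ∈ S} patt V
    (fun Z hZ W hW => h1 Z hZ W hW) (fun Z hZ D hD => h2 Z hZ D hD) (qF ℓ φ) (qgrad ℓ φ) (qB φ)
    (qF_add ℓ φ) (qgrad_add ℓ φ) (qF ℓ φ Zs)
  set F := qF ℓ φ Zs with hF
  have hcont := qF_continuous (m := m) ℓ φ
  obtain ⟨ε, hε, hεf⟩ := Metric.continuous_iff.1 hcont Zs (η / 2) (by positivity)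
  set Q : ℝ := m * ((m + σ) * M) with hQ
  have hQ0 : 0 ≤ Q := by positivity
  refine ⟨ε, hε, √(σ * η) / (Q + 1), by positivity, ?_⟩
  intro Zseq Zbar hopt hmono hsum htsum hZ0 hZε
  have step := fun k (Yo : Fin m → H) (hYo : ∀ i, Yo i ∈ S) =>
    aux_step ℓ φ ip M hM hφ hip hsym hpos S hS σ hσ (Zseq k) (Zseq (k + 1)) Yo (Zbar (k + 1))
      hYo (fun i => (hopt k i).1) (fun i => (hopt k i).2)
  rw [← hQ] at step
  have hf1 : qF ℓ φ (Zbar 1) < F + η := by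
    have s0 := (step 0 (Zseq 0) hZ0).1
    rw [sub_self, norm_zero, zero_add, zero_add] at s0
    have s1 := hεf (Zseq 0) (by rw [dist_eq_norm]; exact hZε)
    rw [Real.dist_eq] at s1
    have s2 := (abs_lt.1 s1).2
    have s3 : ‖Zbar 1 - Zseq 1‖ ≤ √(σ * η) / (Q + 1) :=
      (hsum.le_tsum 0 (fun _ _ => norm_nonneg _)).trans htsum
    rw [le_div_iff₀ (by positivity)] at s3
    have s4 : Q * ‖Zbar 1 - Zseq 1‖ ≤ √(σ * η) := by nlinarith [norm_nonneg (Zbar 1 - Zseq 1)]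
    have s5 : (Q * ‖Zbar 1 - Zseq 1‖) ^ 2 ≤ σ * η := by
      rw [← Real.sq_sqrt (by positivity : 0 ≤ σ * η)]
      gcongr
    generalize Q * ‖Zbar 1 - Zseq 1‖ = a at *
    generalize ‖Zbar 1 - Zseq 0‖ = d at *
    have s6 : a * d ≤ σ / 2 * d ^ 2 + η / 2 := by
      have : 0 ≤ σ * (σ / 2 * d ^ 2 + η / 2 - a * d) := by
        nlinarith [sq_nonneg (σ * d - a)]
      have := nonneg_of_mul_nonneg_right this hσ
      linarith
    linarith
  have hfk : ∀ k, qF ℓ φ (Zbar (k + 1)) < F + η := by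
    intro k
    induction k with
    | zero => exact hf1
    | succ k ih => exact (hmono (k + 1) (by omega)).trans_lt ih
  have hYS : ∀ k i, Zbar (k + 1) i ∈ S := fun k i => (hopt k i).1
  obtain ⟨Yl, hYl, hr⟩ := aux_conv (fun k => Zbar (k + 1)) (fun k => qF ℓ φ (Zbar (k + 1)) - F)
    (fun k => ‖Zbar (k + 1) - Zseq (k + 1)‖ + ‖Zbar (k + 1 + 1) - Zseq (k + 1 + 1)‖)
    (2 / σ) (2 / σ * Q) (√c * Q) (by positivity) (by positivity) (by positivity)
    (fun k => by positivity) (hsum.add ((summable_nat_add_iff 1).2 hsum))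
    (fun k => by have := hmin _ (hYS k); linarith)
    (fun k => by have := hmono (k + 1) (by omega); linarith)
    (fun k => by
      have := (step (k + 1) (Zbar (k + 1)) (hYS k)).1
      have := mul_le_mul_of_nonneg_left this (by positivity : 0 ≤ 2 / σ)
      rw [← mul_assoc, show 2 / σ * (σ / 2) = 1 by field_simp, one_mul] at this
      refine this.trans (le_of_eq ?_)
      ring)
    (fun k => by
      have := hKL _ (hYS (k + 1)) (hfk (k + 1)) _ (by positivity)
        ((step (k + 1) (Zbar (k + 1)) (hYS k)).2)
      refine this.trans (le_of_eq ?_)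
      rw [mul_assoc (√c), mul_pow (√c), Real.sq_sqrt hc])
  have hYlS : ∀ i, Yl i ∈ S := fun i =>
    hScl.mem_of_tendsto ((tendsto_pi_nhds.1 hYl) i) (Eventually.of_forall fun k => hYS k i)
  have hval : qF ℓ φ Yl - F = 0 := by
    have t1 : Tendsto (fun k => qF ℓ φ (Zbar (k + 1)) - F) atTop (𝓝 (qF ℓ φ Yl - F)) :=
      ((hcont.tendsto Yl).comp hYl).sub_const F
    exact tendsto_nhds_unique t1 hr
  refine ⟨Yl, hYlS, fun Z hZ => by have := hmin Z hZ; linarith, ?_⟩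
  rw [← tendsto_add_atTop_iff_nat 1]
  have t2 : Tendsto (fun k => Zbar (k + 1) - Zseq (k + 1)) atTop (𝓝 0) :=
    tendsto_zero_iff_norm_tendsto_zero.2 hsum.tendsto_atTop_zero
  simpa using hYl.sub t2

end Abstract

section Concrete

lemma mip_eq {K : ℕ} (A B : Matrix (Fin K) (Fin K) ℝ) : mip A B = ∑ b, ∑ a, A a b * B a b := by
  simp [mip, Matrix.trace, Matrix.mul_apply]

/-- trace inner product as a bilinear map -/
def ipL (K : ℕ) : Matrix (Fin K) (Fin K) ℝ →ₗ[ℝ] Matrix (Fin K) (Fin K) ℝ →ₗ[ℝ] ℝ :=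
  LinearMap.mk₂ ℝ mip (by intros; simp [mip, Matrix.add_mul])
    (by intros; simp [mip]) (by intros; simp [mip, Matrix.mul_add]) (by intros; simp [mip])

/-- right multiplication data -/
def mulL {K : ℕ} (A B : Matrix (Fin K) (Fin K) ℝ) :
    Matrix (Fin K) (Fin K) ℝ →ₗ[ℝ] Matrix (Fin K) (Fin K) ℝ where
  toFun X := A * X * B
  map_add' X Y := by simp [Matrix.add_mul, Matrix.mul_add]
  map_smul' c X := by simp

def lL {K : ℕ} (e ϱ : Fin K → ℝ) (C : Matrix (Fin K) (Fin K) ℝ) :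
    Matrix (Fin K) (Fin K) ℝ →ₗ[ℝ] ℝ :=
  (ipL K).flip (diagonal ϱ * diagonal e * C * diagonal e)

def phiL {K : ℕ} (e ϱ : Fin K → ℝ) (C : Matrix (Fin K) (Fin K) ℝ) (β : ℝ) :
    Matrix (Fin K) (Fin K) ℝ →ₗ[ℝ] Matrix (Fin K) (Fin K) ℝ →ₗ[ℝ] ℝ :=
  (ipL K).compl₂ (mulL (diagonal e * diagonal ϱ) (diagonal e * C * diagonal e)) + β • ipL K

lemma patt_h2 {K : ℕ} {m : ℕ} (Z D : Fin m → Matrix (Fin K) (Fin K) ℝ)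
    (hZ : ∀ i a b, 0 ≤ Z i a b) (hD : ∀ i a b, Z i a b = 0 → D i a b = 0) :
    ∃ t : ℝ, 0 < t ∧ ∀ i a b, 0 ≤ Z i a b + t * D i a b := by
  have : ∀ᶠ t : ℝ in 𝓝[>] 0, 0 < t ∧ ∀ i a b, 0 ≤ Z i a b + t * D i a b := by
    refine (eventually_mem_nhdsWithin).and ?_
    simp only [eventually_all]
    intro i a b
    rcases (hZ i a b).eq_or_lt with h | h
    · refine Eventually.of_forall fun t => ?_
      rw [hD i a b h.symm, ← h]; simp
    · have hc : Tendsto (fun t : ℝ => Z i a b + t * D i a b) (𝓝[>] 0)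
          (𝓝 (Z i a b + 0 * D i a b)) :=
        (Continuous.tendsto (by fun_prop) 0).mono_left nhdsWithin_le_nhds
      rw [zero_mul, add_zero] at hc
      exact (hc.eventually (lt_mem_nhds h)).mono fun t ht => ht.le
  exact this.exists

/-- face directions -/
def faceV {K m : ℕ} (e ϱ : Fin K → ℝ) (s : Set (Fin m × Fin K × Fin K)) :
    Submodule ℝ (Fin m → Matrix (Fin K) (Fin K) ℝ) where
  carrier := {D | (∀ i, (D i).mulVec e = 0 ∧ (D i)ᵀ.mulVec (fun j => e j * ϱ j) = 0 ∧
    (D i).trace = 0) ∧ ∀ p ∈ s, D p.1 p.2.1 p.2.2 = 0}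
  zero_mem' := by simp
  add_mem' := by
    rintro D D' ⟨h1, h2⟩ ⟨h3, h4⟩
    refine ⟨fun i => ?_, fun p hp => ?_⟩
    · simp [Matrix.add_mulVec, h1 i, h3 i]
    · simp [h2 p hp, h4 p hp]
  smul_mem' := by
    rintro c D ⟨h1, h2⟩
    refine ⟨fun i => ?_, fun p hp => ?_⟩
    · simp [Matrix.smul_mulVec, h1 i]
    · simp [h2 p hp]

lemma Sset_convex {K : ℕ} (e ϱ : Fin K → ℝ) : Convex ℝ (Sset e ϱ) := by
  rintro A ⟨a1, a2, a3, a4⟩ B ⟨b1, b2, b3, b4⟩ s t hs ht hst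
  refine ⟨?_, ?_, ?_, fun a b => ?_⟩
  · rw [Matrix.add_mulVec, Matrix.smul_mulVec, Matrix.smul_mulVec, a1, b1]
    ext; simp [hst]
  · rw [Matrix.transpose_add, Matrix.transpose_smul, Matrix.transpose_smul,
      Matrix.add_mulVec, Matrix.smul_mulVec, Matrix.smul_mulVec, a2, b2, ← add_smul, hst, one_smul]
  · simp [a3, b3]
  · have := a4 a b
    have := b4 a b
    simp only [Matrix.add_apply, Matrix.smul_apply, smul_eq_mul]
    positivity

lemma Sset_closed {K : ℕ} (e ϱ : Fin K → ℝ) : IsClosed (Sset e ϱ) := by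
  have c1 : Continuous fun W : Matrix (Fin K) (Fin K) ℝ => W.mulVec e :=
    continuous_id.matrix_mulVec continuous_const
  have c2 : Continuous fun W : Matrix (Fin K) (Fin K) ℝ => Wᵀ.mulVec (fun j => e j * ϱ j) :=
    continuous_id.matrix_transpose.matrix_mulVec continuous_const
  have c3 : Continuous fun W : Matrix (Fin K) (Fin K) ℝ => W.trace := continuous_id.matrix_trace
  refine (isClosed_eq c1 continuous_const).inter ((isClosed_eq c2 continuous_const).inter
    ((isClosed_eq c3 continuous_const).inter ?_))
  have e : {W : Matrix (Fin K) (Fin K) ℝ | ∀ a b, 0 ≤ W a b} =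
      ⋂ a, ⋂ b, {W : Matrix (Fin K) (Fin K) ℝ | 0 ≤ W a b} := by
    ext W; simp
  change IsClosed {W : Matrix (Fin K) (Fin K) ℝ | ∀ a b, 0 ≤ W a b}
  rw [e]
  exact isClosed_iInter fun a => isClosed_iInter fun b =>
    isClosed_le continuous_const (continuous_id.matrix_elem a b)

lemma fB_eq {K m : ℕ} (e ϱ : Fin K → ℝ) (C : Matrix (Fin K) (Fin K) ℝ) (β : ℝ)
    (Z : Fin m → Matrix (Fin K) (Fin K) ℝ) :
    fB e ϱ C β Z = (∑ i, lL e ϱ C (Z i)) +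
      ∑ i, ∑ j ∈ Finset.Ioi i, phiL e ϱ C β (Z i) (Z j) := by
  have hip : ∀ x y, (ipL K) x y = mip x y := fun x y => rfl
  simp only [fB, fE, lL, phiL, mulL, LinearMap.add_apply, LinearMap.smul_apply,
    LinearMap.compl₂_apply, LinearMap.flip_apply, hip, LinearMap.coe_mk,
    AddHom.coe_mk, Finset.sum_add_distrib, smul_eq_mul, Finset.mul_sum, Matrix.mul_assoc]
  ring

attribute [local instance] Matrix.normedAddCommGroup Matrix.normedSpace

lemma fB_qF {K m : ℕ} (e ϱ : Fin K → ℝ) (C : Matrix (Fin K) (Fin K) ℝ) (β : ℝ)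
    (Z : Fin m → Matrix (Fin K) (Fin K) ℝ) :
    fB e ϱ C β Z = qF (lL e ϱ C) (phiL e ϱ C β) Z := fB_eq e ϱ C β Z

lemma mip_entry {K : ℕ} (A : Matrix (Fin K) (Fin K) ℝ) (a b : Fin K) : (A a b) ^ 2 ≤ mip A A := by
  rw [mip_eq]
  calc (A a b) ^ 2 = A a b * A a b := sq _
    _ ≤ ∑ a, A a b * A a b := Finset.single_le_sum (f := fun a => A a b * A a b)
        (fun a _ => mul_self_nonneg _) (Finset.mem_univ a)
    _ ≤ _ := Finset.single_le_sum (f := fun b => ∑ a, A a b * A a b)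
        (fun b _ => Finset.sum_nonneg fun a _ => mul_self_nonneg _) (Finset.mem_univ b)

lemma mip_self_nonneg {K : ℕ} (A : Matrix (Fin K) (Fin K) ℝ) : 0 ≤ mip A A := by
  rw [mip_eq]
  exact Finset.sum_nonneg fun b _ => Finset.sum_nonneg fun a _ => mul_self_nonneg _

lemma norm_le_mip {K : ℕ} (A : Matrix (Fin K) (Fin K) ℝ) : ‖A‖ ≤ √(mip A A) := by
  refine (Matrix.norm_le_iff (Real.sqrt_nonneg _)).2 fun a b => ?_
  refine Real.le_sqrt_of_sq_le ?_
  rw [Real.norm_eq_abs, sq_abs]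
  exact mip_entry A a b

lemma norm_le_nZ {K m : ℕ} (Z : Fin m → Matrix (Fin K) (Fin K) ℝ) : ‖Z‖ ≤ nZ Z := by
  refine (pi_norm_le_iff_of_nonneg (Real.sqrt_nonneg _)).2 fun i => ?_
  refine (norm_le_mip _).trans (Real.sqrt_le_sqrt ?_)
  exact Finset.single_le_sum (f := fun i => mip (Z i) (Z i))
    (fun i _ => mip_self_nonneg _) (Finset.mem_univ i)

lemma concrete_main {K m : ℕ} (e ϱ : Fin K → ℝ) (C : Matrix (Fin K) (Fin K) ℝ) (β σ : ℝ)
    (hσ : 0 < σ) (Zs : Fin m → Matrix (Fin K) (Fin K) ℝ)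
    (hmin : ∀ Z : Fin m → Matrix (Fin K) (Fin K) ℝ, (∀ i, Z i ∈ Sset e ϱ) →
      fB e ϱ C β Zs ≤ fB e ϱ C β Z) :
    ∃ ε : ℝ, 0 < ε ∧ ∃ δ : ℝ, 0 < δ ∧
      ∀ (Zseq Zbar : ℕ → Fin m → Matrix (Fin K) (Fin K) ℝ),
        IsBlockOpt e ϱ C β σ Zseq Zbar →
        (∀ k : ℕ, 1 ≤ k → fB e ϱ C β (Zbar (k + 1)) ≤ fB e ϱ C β (Zbar k)) →
        Summable (fun k : ℕ => nZ (Zbar (k + 1) - Zseq (k + 1))) →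
        (∑' k : ℕ, nZ (Zbar (k + 1) - Zseq (k + 1))) ≤ δ →
        (∀ i, Zseq 0 i ∈ Sset e ϱ) →
        nZ (Zseq 0 - Zs) < ε →
        ∃ Zopt : Fin m → Matrix (Fin K) (Fin K) ℝ,
          (∀ i, Zopt i ∈ Sset e ϱ) ∧
          (∀ Z : Fin m → Matrix (Fin K) (Fin K) ℝ,
            (∀ i, Z i ∈ Sset e ϱ) → fB e ϱ C β Zopt ≤ fB e ϱ C β Z) ∧
          Tendsto Zseq atTop (𝓝 Zopt) := by
  simp only [fB_qF] at hmin
  have hip : ∀ x y, (ipL K) x y = mip x y := fun x y => rfl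
  obtain ⟨ε, hε, δ, hδ, h⟩ := aux_main (lL e ϱ C) (phiL e ϱ C β) (ipL K)
    (fun x y => by simp only [hip, mip_eq, mul_comm])
    (fun x => by
      rw [hip, ← Real.le_sqrt (norm_nonneg _) (mip_self_nonneg x)]
      exact norm_le_mip x)
    (Sset e ϱ) (Sset_convex e ϱ) (Sset_closed e ϱ) σ hσ
    (fun Z : Fin m → Matrix (Fin K) (Fin K) ℝ => {p | Z p.1 p.2.1 p.2.2 = 0}) (faceV e ϱ)
    (by
      intro Z hZ W hW hp
      refine ⟨fun i => ?_, fun p hp' => ?_⟩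
      · obtain ⟨a1, a2, a3, -⟩ := hZ i
        obtain ⟨b1, b2, b3, -⟩ := hW i
        simp [Matrix.sub_mulVec, a1, a2, a3, b1, b2, b3]
      · have hp2 : p ∈ {p : Fin m × Fin K × Fin K | W p.1 p.2.1 p.2.2 = 0} := by
          rw [← hp]; exact hp'
        have e1 : Z p.1 p.2.1 p.2.2 = 0 := hp'
        have e2 : W p.1 p.2.1 p.2.2 = 0 := hp2
        simp [e1, e2])
    (by
      rintro Z hZ D ⟨hD1, hD2⟩
      obtain ⟨t, ht, htn⟩ := patt_h2 Z D (fun i => (hZ i).2.2.2)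
        (fun i a b h0 => hD2 (i, a, b) h0)
      refine ⟨t, ht, fun i => ?_⟩
      obtain ⟨a1, a2, a3, -⟩ := hZ i
      obtain ⟨d1, d2, d3⟩ := hD1 i
      refine ⟨?_, ?_, ?_, fun a b => ?_⟩
      · simp [Matrix.add_mulVec, Matrix.smul_mulVec, a1, d1]
      · simp [Matrix.add_mulVec, Matrix.smul_mulVec, a2, d2]
      · simp [a3, d3]
      · simpa using htn i a b) Zs hmin
  refine ⟨ε, hε, δ, hδ, fun Zseq Zbar hopt hmono hsum htsum h0 hZ => ?_⟩
  have hs : Summable (fun k => ‖Zbar (k + 1) - Zseq (k + 1)‖) :=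
    Summable.of_nonneg_of_le (fun _ => norm_nonneg _) (fun _ => norm_le_nZ _) hsum
  simp only [fB_qF] at hmono ⊢
  refine h Zseq Zbar ?_ hmono hs ((hs.tsum_le_tsum (fun _ => norm_le_nZ _) hsum).trans htsum)
    h0 ((norm_le_nZ _).trans_lt hZ)
  intro k i
  refine ⟨(hopt k i).1, fun X hX => ?_⟩
  have := (hopt k i).2 X hX
  simp only [blockObj, fB_qF] at this
  exact this

end Concrete

/-- Theorem 3.2, part 2.
There is a threshold `σ₀ > 0` such that for every `σ ≥ σ₀` and every global minimizer `Z*` of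
`(P_β)` there exist `ε > 0` and `δ > 0` with the following property: any inexact PBCD sequence
`{Z^{(k)}}` whose block-optimal sequence `{Z̄^{(k)}}` satisfies (i) `{f_β(Z̄^{(k)})}` is
nonincreasing with limit `F̄` and `f_β(Z̄^{(k)}) > F̄` for all `k ≥ 1`,
(ii) `Σ_{k≥1} ‖Z̄^{(k)} − Z^{(k)}‖_F ≤ δ`, and (iii) `Z^{(0)} ∈ S^{N−1}` with
`‖Z^{(0)} − Z*‖_F < ε`, converges to a global minimizer of `(P_β)`. -/
theorem pbcd_inexact_convergence_to_global_minimizer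
    (K N : ℕ) (hK : 1 ≤ K) (hN : 3 ≤ N)
    (e ϱ : Fin K → ℝ) (he : ∀ a, 0 < e a) (hϱ : ∀ a, 0 ≤ ϱ a)
    (C : Matrix (Fin K) (Fin K) ℝ) (hCsym : Cᵀ = C)
    (hC0 : ∀ a b, 0 ≤ C a b) (hCd : ∀ a, C a a = 0)
    (hS : (Sset e ϱ).Nonempty)
    (β : ℝ) (hβ : 0 < β) :
    ∃ σ₀ : ℝ, 0 < σ₀ ∧ ∀ σ : ℝ, σ₀ ≤ σ →
      ∀ Zstar : Fin (N - 1) → Matrix (Fin K) (Fin K) ℝ,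
        (∀ i, Zstar i ∈ Sset e ϱ) →
        (∀ Z : Fin (N - 1) → Matrix (Fin K) (Fin K) ℝ,
          (∀ i, Z i ∈ Sset e ϱ) → fB e ϱ C β Zstar ≤ fB e ϱ C β Z) →
        ∃ ε : ℝ, 0 < ε ∧ ∃ δ : ℝ, 0 < δ ∧
          ∀ (Zseq Zbar : ℕ → Fin (N - 1) → Matrix (Fin K) (Fin K) ℝ) (Fbar : ℝ),
            IsBlockOpt e ϱ C β σ Zseq Zbar →
            (∀ k : ℕ, 1 ≤ k → fB e ϱ C β (Zbar (k + 1)) ≤ fB e ϱ C β (Zbar k)) →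
            Tendsto (fun k : ℕ => fB e ϱ C β (Zbar (k + 1))) atTop (nhds Fbar) →
            (∀ k : ℕ, 1 ≤ k → Fbar < fB e ϱ C β (Zbar k)) →
            Summable (fun k : ℕ => nZ (Zbar (k + 1) - Zseq (k + 1))) →
            (∑' k : ℕ, nZ (Zbar (k + 1) - Zseq (k + 1))) ≤ δ →
            (∀ i, Zseq 0 i ∈ Sset e ϱ) →
            nZ (Zseq 0 - Zstar) < ε →
            ∃ Zopt : Fin (N - 1) → Matrix (Fin K) (Fin K) ℝ,
              (∀ i, Zopt i ∈ Sset e ϱ) ∧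
              (∀ Z : Fin (N - 1) → Matrix (Fin K) (Fin K) ℝ,
                (∀ i, Z i ∈ Sset e ϱ) → fB e ϱ C β Zopt ≤ fB e ϱ C β Z) ∧
              Tendsto Zseq atTop (nhds Zopt) := by
  refine ⟨1, one_pos, fun σ hσ Zstar _ hmin => ?_⟩
  obtain ⟨ε, hε, δ, hδ, h⟩ := concrete_main e ϱ C β σ (by linarith) Zstar hmin
  exact ⟨ε, hε, δ, hδ, fun Zseq Zbar _ hopt hmono _ _ hsum htsum h0 hZ =>
    h Zseq Zbar hopt hmono hsum htsum h0 hZ⟩
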